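/- Under these hypotheses, if moreover every g ∈ Γ \ {1} acts nontrivially on X (so that Γ may be regarded as a subgroup of the group C(X) of continuous maps X → X), then Γ is discrete in C(X) for the compact-open topology; that is, there is an open neighborhood V of the identity map in the compact-open topology with Γ ∩ V = {1}. -/

import Mathlib

/-- A geodesic metric space: any two points are joined by a geodesic parametrized by
arc length on `[0, dist x y]`. -/
def IsGeodesicSpace (X : Type*) [MetricSpace X] : Prop :=
  ∀ x y : X, ∃ γ : ℝ → X, γ 0 = x ∧ γ (dist x y) = y ∧
    ∀ s ∈ Set.Icc (0:ℝ) (dist x y), ∀ t ∈ Set.Icc (0:ℝ) (dist x y),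
      dist (γ s) (γ t) = |s - t|

/-!
Place over every orbit point `g • x₀` the sheet `closedBall (g • x₀) (r₁ / 2)`, and glue the sheets
of `g` and `h` along their overlap exactly when `g⁻¹ * h ∈ S`. For `x` in the sheet of `g`, the
point `(g * s) • x₀` with `s ∈ S` that is nearest to `x` has distance at most `r₀` from `x`, by the
bound on the Dirichlet domain. So the sheet of `g` can be traded near `x` for that of `g * s`, which
contains the ball of radius `r₁ / 2 - r₀` around `x`, and the glued space covers `X`. As `X` is
simply connected, this covering has a section through any sheet, and it spreads over all sheets
reachable by steps in `S`, that is, over all sheets. Hence overlapping sheets are always glued,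
which says that `S` is exactly the set of `g` with `dist (g • x₀) x₀ ≤ r₁`. This set is finite, so
the condition `f x₀ ∈ ball x₀ r₁` leaves only finitely many elements of `Γ`, and each of them other
than `1` is excluded by its value at a point it moves.
-/

open Metric Set Topology

/-- A recipe for gluing subsets of `X`, the sheets, into a covering space of `X`: over a point `x`,
the sheets containing `x` are identified along `rel`. Transitivity is only required for sheets with
a common point. -/
structure SheetGluing (ι X : Type*) [TopologicalSpace X] where
  sheet : ι → Set X
  rel : ι → ι → Prop
  rel_refl : ∀ i, rel i i
  rel_symm : ∀ {i j}, rel i j → rel j i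
  rel_trans : ∀ {i j k x}, x ∈ sheet i → x ∈ sheet j → x ∈ sheet k →
    rel i j → rel j k → rel i k
  exists_isOpen_subset_sheet : ∀ x, ∃ U, IsOpen U ∧ x ∈ U ∧
    ∀ i, (U ∩ sheet i).Nonempty → ∃ j, rel i j ∧ U ⊆ sheet j

namespace SheetGluing

variable {ι X : Type*} [TopologicalSpace X] (G : SheetGluing ι X)

/-- The identification of points of the disjoint union of the sheets. -/
def setoid : Setoid (Σ i, G.sheet i) where
  r p q := (p.2 : X) = q.2 ∧ G.rel p.1 q.1
  iseqv :=
    { refl := fun p ↦ ⟨rfl, G.rel_refl p.1⟩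
      symm := fun h ↦ ⟨h.1.symm, G.rel_symm h.2⟩
      trans := fun {p q r} hpq hqr ↦ ⟨hpq.1.trans hqr.1,
        G.rel_trans p.2.2 (hpq.1 ▸ q.2.2) ((hpq.1.trans hqr.1) ▸ r.2.2) hpq.2 hqr.2⟩ }

/-- The space glued from the sheets, with the quotient topology. -/
def Total : Type _ := Quotient G.setoid

instance : TopologicalSpace G.Total := inferInstanceAs (TopologicalSpace (Quotient G.setoid))

/-- The point of the glued space given by a point of the `i`-th sheet. -/
def incl (i : ι) (x : G.sheet i) : G.Total := Quotient.mk G.setoid ⟨i, x⟩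

/-- The projection of the glued space to the base. -/
def proj : G.Total → X := Quotient.lift (fun p ↦ (p.2 : X)) fun _ _ h ↦ h.1

variable {U : Set X}

/-- The identification of the sheets containing `U`; the point `x` of `U` makes the relation
transitive. -/
def setoidOver (x : U) : Setoid {i // U ⊆ G.sheet i} where
  r i j := G.rel i j
  iseqv :=
    { refl := fun i ↦ G.rel_refl i
      symm := G.rel_symm
      trans := fun {i j k} ↦ G.rel_trans (i.2 x.2) (j.2 x.2) (k.2 x.2) }

/-- The classes of sheets containing `U`: the fiber of the glued space over any point of a
sufficiently small set `U`. -/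
def ClassesOver (x : U) : Type _ := Quotient (G.setoidOver x)

instance (x : U) : TopologicalSpace (G.ClassesOver x) := ⊥

instance (x : U) : DiscreteTopology (G.ClassesOver x) := ⟨rfl⟩

/-- The parametrization of the part of the glued space over `U` by `U` and the classes of sheets
containing `U`. -/
def chart (x : U) (p : U × G.ClassesOver x) : G.proj ⁻¹' U :=
  Quotient.lift (s := G.setoidOver x)
    (fun i ↦ ⟨G.incl i (inclusion i.2 p.1), p.1.2⟩)
    (fun _ _ h ↦ Subtype.ext (Quotient.sound (s := G.setoid) ⟨rfl, h⟩)) p.2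

variable {G} {i j : ι}

theorem incl_eq_incl {x : G.sheet i} {y : G.sheet j} :
    G.incl i x = G.incl j y ↔ (x : X) = y ∧ G.rel i j :=
  Quotient.eq (r := G.setoid)

theorem exists_incl_eq (e : G.Total) : ∃ i x, G.incl i x = e :=
  Quotient.inductionOn e fun ⟨i, x⟩ ↦ ⟨i, x, rfl⟩

theorem isOpen_iff {s : Set G.Total} : IsOpen s ↔ ∀ i, IsOpen (G.incl i ⁻¹' s) :=
  isQuotientMap_quot_mk.isOpen_preimage.symm.trans isOpen_sigma_iff

theorem continuous_incl (i : ι) : Continuous (G.incl i) :=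
  continuous_quot_mk.comp continuous_sigmaMk

theorem continuous_proj : Continuous G.proj :=
  (continuous_sigma fun _ ↦ continuous_subtype_val).quotient_lift _

theorem isOpen_range_incl (hU : IsOpen U) (hUi : U ⊆ G.sheet i) :
    IsOpen (range fun y : U ↦ G.incl i (inclusion hUi y)) := by
  refine isOpen_iff.2 fun j ↦ ?_
  have hpreimage : G.incl j ⁻¹' range (fun y : U ↦ G.incl i (inclusion hUi y)) =
      {y : G.sheet j | (y : X) ∈ U ∧ G.rel i j} := by
    ext y
    simp only [mem_preimage, mem_range, incl_eq_incl, Subtype.exists, mem_ofPred_eq]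
    exact ⟨fun ⟨_, hz, hzy, hij⟩ ↦ ⟨hzy ▸ hz, hij⟩, fun ⟨hy, hij⟩ ↦ ⟨y, hy, rfl, hij⟩⟩
  rw [hpreimage]
  exact (hU.preimage continuous_subtype_val).and isOpen_const

theorem chart_injective (x : U) : Function.Injective (G.chart x) := by
  rintro ⟨y, ⟨i⟩⟩ ⟨z, ⟨j⟩⟩ h
  obtain ⟨hyz, hij⟩ := incl_eq_incl.1 (congrArg Subtype.val h)
  exact Prod.ext (Subtype.ext hyz) (Quotient.sound (s := G.setoidOver x) hij)

theorem chart_surjective (x : U)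
    (hlarge : ∀ i, (U ∩ G.sheet i).Nonempty → ∃ j, G.rel i j ∧ U ⊆ G.sheet j) :
    Function.Surjective (G.chart x) := by
  rintro ⟨e, he⟩
  obtain ⟨i, y, rfl⟩ := exists_incl_eq e
  obtain ⟨j, hij, hUj⟩ := hlarge i ⟨y, he, y.2⟩
  exact ⟨⟨⟨y, he⟩, Quotient.mk (G.setoidOver x) ⟨j, hUj⟩⟩,
    Subtype.ext (incl_eq_incl.2 ⟨rfl, G.rel_symm hij⟩)⟩

theorem continuous_chart (x : U) : Continuous (G.chart x) := by
  refine continuous_prod_of_discrete_right.2 ?_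
  rintro ⟨i⟩
  exact ((continuous_incl i.1).comp (continuous_inclusion i.2)).subtype_mk _

theorem isOpen_image_chart_setOf_snd_eq (x : U) (hU : IsOpen U) (q : G.ClassesOver x) :
    IsOpen (G.chart x '' {p | p.2 = q}) := by
  obtain ⟨i⟩ := q
  have himage : G.chart x '' {p | p.2 = Quotient.mk (G.setoidOver x) i} =
      Subtype.val ⁻¹' range (fun y : U ↦ G.incl i (inclusion i.2 y)) := by
    ext e
    constructor
    · rintro ⟨⟨y, _⟩, rfl, rfl⟩
      exact ⟨y, rfl⟩
    · rintro ⟨y, hy⟩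
      exact ⟨⟨y, _⟩, rfl, Subtype.ext hy⟩
  exact himage ▸ (isOpen_range_incl hU i.2).preimage continuous_subtype_val

theorem isEvenlyCovered_proj (x : U) (hU : IsOpen U)
    (hlarge : ∀ i, (U ∩ G.sheet i).Nonempty → ∃ j, G.rel i j ∧ U ⊆ G.sheet j) :
    IsEvenlyCovered G.proj x (G.ClassesOver x) := by
  let e := Equiv.ofBijective (G.chart x) ⟨chart_injective _, chart_surjective _ hlarge⟩
  have hfst (p : G.proj ⁻¹' U) : ((e.symm p).1 : X) = G.proj p := by
    obtain ⟨⟨y, ⟨i⟩⟩, rfl⟩ := e.surjective p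
    rw [e.symm_apply_apply]
    rfl
  have hinv : Continuous e.symm := by
    refine .prodMk ?_ (continuous_discrete_rng.2 fun q ↦ ?_)
    · exact continuous_induced_rng.2 <|
        (continuous_proj.comp continuous_subtype_val).congr fun p ↦ (hfst p).symm
    · exact (e.image_eq_preimage_symm {p | p.2 = q}).subst (isOpen_image_chart_setOf_snd_eq _ hU q)
  exact ⟨inferInstance, U, x.2, hU, hU.preimage continuous_proj,
    ⟨e.symm, hinv, continuous_chart _⟩, hfst⟩

theorem isCoveringMap_proj : IsCoveringMap G.proj := fun x ↦
  let ⟨_, hU, hx, hlarge⟩ := G.exists_isOpen_subset_sheet x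
  (isEvenlyCovered_proj ⟨x, hx⟩ hU hlarge).to_isEvenlyCovered_preimage

theorem exists_section [SimplyConnectedSpace X] [LocallyPathConnectedSpace X] (e : G.Total) :
    ∃ σ : C(X, G.Total), σ (G.proj e) = e ∧ ∀ x, G.proj (σ x) = x :=
  let ⟨σ, ⟨hσe, hσ⟩, _⟩ := isCoveringMap_proj.existsUnique_continuousMap_lifts
    (ContinuousMap.id X) (G.proj e) e rfl
  ⟨σ, hσe, congrFun hσ⟩

theorem section_eq_incl_of_isPreconnected {σ : C(X, G.Total)} (hσ : ∀ x, G.proj (σ x) = x)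
    (hi : IsPreconnected (G.sheet i)) {x : G.sheet i} (hx : σ x = G.incl i x) (y : G.sheet i) :
    σ y = G.incl i y := by
  have := isPreconnected_iff_preconnectedSpace.1 hi
  exact congrFun (isCoveringMap_proj.eq_of_comp_eq (σ.continuous.comp continuous_subtype_val)
    (continuous_incl i) (funext fun z ↦ hσ z) x hx) y

theorem rel_of_reflTransGen [SimplyConnectedSpace X] [LocallyPathConnectedSpace X]
    (hconn : ∀ i, IsPreconnected (G.sheet i))
    (hchain : Relation.ReflTransGen
      (fun i j ↦ G.rel i j ∧ (G.sheet i ∩ G.sheet j).Nonempty) i j)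
    (hij : (G.sheet i ∩ G.sheet j).Nonempty) : G.rel i j := by
  obtain ⟨x, hxi, hxj⟩ := hij
  obtain ⟨σ, hσx, hσ⟩ := exists_section (G.incl i ⟨x, hxi⟩)
  have hσi : ∀ y : G.sheet i, σ y = G.incl i y :=
    section_eq_incl_of_isPreconnected hσ (hconn i) hσx
  have hσj : ∀ y : G.sheet j, σ y = G.incl j y := by
    clear hxj
    induction hchain with
    | refl => exact hσi
    | @tail k l _ hkl ih =>
      obtain ⟨hrel, z, hzk, hzl⟩ := hkl
      exact section_eq_incl_of_isPreconnected hσ (hconn l) (x := ⟨z, hzl⟩)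
        ((ih ⟨z, hzk⟩).trans (incl_eq_incl.2 ⟨rfl, hrel⟩))
  exact (incl_eq_incl.1 ((hσi ⟨x, hxi⟩).symm.trans (hσj ⟨x, hxj⟩))).2

end SheetGluing

namespace IsGeodesicSpace

variable {X : Type*} [MetricSpace X]

theorem joinedIn_closedBall (hgeo : IsGeodesicSpace X) (x y : X) :
    JoinedIn (closedBall x (dist x y)) x y := by
  obtain ⟨γ, hγ₀, hγ₁, hγ⟩ := hgeo x y
  have hscale : MapsTo (· * dist x y) unitInterval (Icc 0 (dist x y)) := fun t ht ↦
    ⟨mul_nonneg ht.1 dist_nonneg, mul_le_of_le_one_left dist_nonneg ht.2⟩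
  have hcont : ContinuousOn γ (Icc 0 (dist x y)) :=
    (LipschitzOnWith.of_dist_le_mul (K := 1) fun s hs t ht ↦ by
      rw [hγ s hs t ht, Real.dist_eq, NNReal.coe_one, one_mul]).continuousOn
  refine .ofLine (f := fun t ↦ γ (t * dist x y)) (hcont.comp (by fun_prop) hscale)
    (by simpa using hγ₀) (by simpa using hγ₁) ?_
  rintro _ ⟨t, ht, rfl⟩
  have hdist := hγ _ (hscale ht) 0 (left_mem_Icc.2 dist_nonneg)
  rw [hγ₀, sub_zero, abs_of_nonneg (hscale ht).1] at hdist
  exact hdist.trans_le (hscale ht).2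

theorem isPathConnected_closedBall (hgeo : IsGeodesicSpace X) (x : X) {r : ℝ} (hr : 0 ≤ r) :
    IsPathConnected (closedBall x r) :=
  ⟨x, mem_closedBall_self hr, fun {y} hy ↦
    (hgeo.joinedIn_closedBall x y).mono (closedBall_subset_closedBall (mem_closedBall'.1 hy))⟩

theorem locallyPathConnectedSpace (hgeo : IsGeodesicSpace X) : LocallyPathConnectedSpace X :=
  .of_bases (fun _ ↦ nhds_basis_closedBall) fun x _ hr ↦ hgeo.isPathConnected_closedBall x hr.le

theorem exists_dist_eq_half (hgeo : IsGeodesicSpace X) (x y : X) :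
    ∃ m, dist m x = dist x y / 2 ∧ dist m y = dist x y / 2 := by
  obtain ⟨γ, hγ₀, hγ₁, hγ⟩ := hgeo x y
  have hd : 0 ≤ dist x y := dist_nonneg
  have hhalf : dist x y / 2 ∈ Icc 0 (dist x y) := ⟨by positivity, half_le_self hd⟩
  refine ⟨γ (dist x y / 2), ?_, ?_⟩
  · have h := hγ _ hhalf 0 (left_mem_Icc.2 hd)
    rwa [hγ₀, sub_zero, abs_of_nonneg hhalf.1] at h
  · have h := hγ _ hhalf _ (right_mem_Icc.2 hd)
    rwa [hγ₁, half_sub, abs_neg, abs_of_nonneg hhalf.1] at h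

theorem closedBall_inter_closedBall_nonempty (hgeo : IsGeodesicSpace X) {x y : X} {r : ℝ}
    (hxy : dist x y ≤ r) : (closedBall x (r / 2) ∩ closedBall y (r / 2)).Nonempty :=
  let ⟨m, hmx, hmy⟩ := hgeo.exists_dist_eq_half x y
  ⟨m, hmx.trans_le (by gcongr), hmy.trans_le (by gcongr)⟩

end IsGeodesicSpace

/-- The closed Dirichlet domain of `x₀` relative to `S`: the points of `X` that are at least as
close to `x₀` as to any of its translates by `S`. -/
def dirichletDomain {Γ X : Type*} [PseudoMetricSpace X] [SMul Γ X] (S : Set Γ) (x₀ : X) : Set X :=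
  {x | ∀ g ∈ S, dist x₀ x ≤ dist (g • x₀) x}

theorem self_mem_dirichletDomain {Γ X : Type*} [PseudoMetricSpace X] [SMul Γ X] (S : Set Γ)
    (x₀ : X) : x₀ ∈ dirichletDomain S x₀ := fun _ _ ↦ by
  rw [dist_self]
  exact dist_nonneg

section Orbit

variable {Γ X : Type*} [Group Γ] {S : Set Γ} {r₀ r₁ : ℝ}

theorem exists_mem_dist_smul_le [PseudoMetricSpace X] [MulAction Γ X] [IsIsometricSMul Γ X] {x₀ : X}
    (hfin : S.Finite) (hone : 1 ∈ S) (hF : dirichletDomain S x₀ ⊆ closedBall x₀ r₀)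
    (hmul : ∀ g ∈ S, ∀ h ∈ S, dist ((g * h) • x₀) x₀ ≤ r₁ → g * h ∈ S)
    {x : X} (hx : dist x x₀ ≤ r₁ / 2) : ∃ s ∈ S, dist x (s • x₀) ≤ r₀ := by
  obtain ⟨s, hs, hmin⟩ := S.exists_min_image (fun s ↦ dist (s • x₀) x) hfin ⟨1, hone⟩
  have hmem : s⁻¹ • x ∈ dirichletDomain S x₀ := by
    intro h hh
    rw [← dist_smul s x₀, ← dist_smul s (h • x₀), smul_inv_smul, smul_smul]
    by_contra! hlt
    have hle : dist (s • x₀) x ≤ r₁ / 2 := by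
      have := hmin 1 hone
      rw [one_smul, dist_comm x₀] at this
      exact this.trans hx
    have hshort : dist ((s * h) • x₀) x₀ ≤ r₁ := by
      linarith [dist_triangle ((s * h) • x₀) x x₀]
    exact hlt.not_ge (hmin _ (hmul s hs h hh hshort))
  refine ⟨s, hs, ?_⟩
  rw [← dist_smul s⁻¹, inv_smul_smul]
  exact hF hmem

/-- The balls of radius `r₁ / 2` around the orbit of `x₀`, glued along right multiplication
by `S`. -/
def orbitGluing [PseudoMetricSpace X] [MulAction Γ X] [IsIsometricSMul Γ X] {x₀ : X}
    (hfin : S.Finite) (hone : 1 ∈ S) (hinv : ∀ g ∈ S, g⁻¹ ∈ S)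
    (hF : dirichletDomain S x₀ ⊆ closedBall x₀ r₀) (hr : 2 * r₀ < r₁)
    (hmul : ∀ g ∈ S, ∀ h ∈ S, dist ((g * h) • x₀) x₀ ≤ r₁ → g * h ∈ S) : SheetGluing Γ X where
  sheet g := closedBall (g • x₀) (r₁ / 2)
  rel g h := g⁻¹ * h ∈ S
  rel_refl g := by rwa [inv_mul_cancel]
  rel_symm h := by simpa using hinv _ h
  rel_trans {g h k x} hg _ hk hgh hhk := by
    have hgk : (g⁻¹ * h) * (h⁻¹ * k) = g⁻¹ * k := by group
    rw [← hgk]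
    refine hmul _ hgh _ hhk ?_
    rw [hgk, ← dist_smul g, smul_smul, mul_inv_cancel_left]
    rw [mem_closedBall] at hg hk
    linarith [dist_triangle_left (k • x₀) (g • x₀) x]
  exists_isOpen_subset_sheet x := by
    refine ⟨ball x ((r₁ / 2 - r₀) / 2), isOpen_ball, mem_ball_self (by linarith), ?_⟩
    rintro g ⟨y, hyx, hyg⟩
    have hnear : dist (g⁻¹ • y) x₀ ≤ r₁ / 2 := by rwa [← dist_smul g, smul_inv_smul]
    obtain ⟨s, hs, hys⟩ := exists_mem_dist_smul_le hfin hone hF hmul hnear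
    rw [← dist_smul g, smul_inv_smul, smul_smul] at hys
    refine ⟨g * s, by rwa [inv_mul_cancel_left], fun z hzx ↦ ?_⟩
    rw [mem_ball] at hyx hzx
    rw [mem_closedBall]
    linarith [dist_triangle z y ((g * s) • x₀), dist_triangle_right z y x]

theorem mem_iff_dist_smul_le [MetricSpace X] [MulAction Γ X] [IsIsometricSMul Γ X]
    [SimplyConnectedSpace X] (hgeo : IsGeodesicSpace X) {x₀ : X}
    (hfin : S.Finite) (hne : S.Nonempty) (hinv : ∀ g ∈ S, g⁻¹ ∈ S)
    (hgen : Subgroup.closure S = ⊤)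
    (hF : dirichletDomain S x₀ ⊆ closedBall x₀ r₀) (hr : 2 * r₀ < r₁)
    (hle : ∀ g ∈ S, dist (g • x₀) x₀ ≤ r₁)
    (hmul : ∀ g ∈ S, ∀ h ∈ S, dist ((g * h) • x₀) x₀ ≤ r₁ → g * h ∈ S) {g : Γ} :
    g ∈ S ↔ dist (g • x₀) x₀ ≤ r₁ := by
  refine ⟨hle g, fun hg ↦ ?_⟩
  have hr₁ : 0 ≤ r₁ := dist_nonneg.trans hg
  have hone : 1 ∈ S := by
    obtain ⟨s, hs⟩ := hne
    simpa [hr₁] using hmul s hs s⁻¹ (hinv s hs)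
  have := hgeo.locallyPathConnectedSpace
  let G := orbitGluing hfin hone hinv hF hr hmul
  have hconn (h : Γ) : IsPreconnected (G.sheet h) :=
    (hgeo.isPathConnected_closedBall _ (by positivity)).isConnected.isPreconnected
  have hadj {h s : Γ} (hs : s ∈ S) :
      G.rel h (h * s) ∧ (G.sheet h ∩ G.sheet (h * s)).Nonempty := by
    refine ⟨by simpa [G, orbitGluing] using hs, hgeo.closedBall_inter_closedBall_nonempty ?_⟩
    rw [mul_smul, dist_smul, dist_comm]
    exact hle s hs
  have hchain : Relation.ReflTransGen
      (fun h k ↦ G.rel h k ∧ (G.sheet h ∩ G.sheet k).Nonempty) 1 g := by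
    have hclosure : g ∈ Subgroup.closure S := hgen ▸ Subgroup.mem_top g
    clear hg
    induction hclosure using Subgroup.closure_induction_right with
    | one => exact .refl
    | mul_right _ _ s hs ih => exact ih.tail (hadj hs)
    | mul_inv_cancel _ _ s hs ih => exact ih.tail (hadj (hinv s hs))
  have hmeet : (G.sheet 1 ∩ G.sheet g).Nonempty :=
    hgeo.closedBall_inter_closedBall_nonempty (by rwa [one_smul, dist_comm])
  simpa [G, orbitGluing] using G.rel_of_reflTransGen hconn hchain hmeet

end Orbit

theorem exists_isOpen_forall_smul_mem_iff_eq_one {Γ X : Type*} [Group Γ] [TopologicalSpace X]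
    [T1Space X] [MulAction Γ X] [ContinuousConstSMul Γ X] [FaithfulSMul Γ X] {U : Set X} {x : X}
    (hU : IsOpen U) (hx : x ∈ U) (hfin : {g : Γ | g • x ∈ U}.Finite) :
    ∃ V : Set C(X, X), IsOpen V ∧
      ∀ g : Γ, (⟨(g • ·), continuous_const_smul g⟩ : C(X, X)) ∈ V ↔ g = 1 := by
  have : Nonempty X := ⟨x⟩
  have hmoved (g : Γ) (hg : g ≠ 1) : ∃ y : X, g • y ≠ y := by
    contrapose! hg
    exact eq_of_smul_eq_smul fun y ↦ (hg y).trans (one_smul Γ y).symm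
  choose! y hy using hmoved
  refine ⟨{f | f x ∈ U} ∩ ⋂ g ∈ {g : Γ | g • x ∈ U} \ {1}, {f | f (y g) ≠ g • y g}, ?_,
    fun g ↦ ⟨fun ⟨hgx, hg⟩ ↦ ?_, ?_⟩⟩
  · exact (hU.preimage (continuous_eval_const x)).inter <|
      (hfin.subset sdiff_subset).isOpen_biInter fun g _ ↦
        isOpen_ne.preimage (continuous_eval_const (y g))
  · by_contra hne
    exact mem_iInter₂.1 hg g ⟨hgx, hne⟩ rfl
  · rintro rfl
    refine ⟨by simpa using hx, mem_iInter₂.2 fun h hh ↦ ?_⟩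
    simpa using (hy h hh.2).symm

theorem stmt_2
    {Γ X : Type*} [Group Γ] [MetricSpace X] [MulAction Γ X]
    (hiso : ∀ g : Γ, Isometry (fun x : X => g • x))
    [SimplyConnectedSpace X] (hgeo : IsGeodesicSpace X)
    (S : Set Γ) (hfin : S.Finite) (hsymm : ∀ g ∈ S, g⁻¹ ∈ S)
    (hgen : Subgroup.closure S = ⊤)
    (x₀ : X)
    (FS : Set X) (hFS : FS = {x : X | ∀ g ∈ S, dist x₀ x ≤ dist (g • x₀) x})
    (hbdd : BddAbove ((fun x : X => dist x₀ x) '' FS))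
    (r₀ : ℝ) (hr₀ : r₀ = sSup ((fun x : X => dist x₀ x) '' FS))
    (r₁ : ℝ) (hr₁ : 2 * r₀ < r₁)
    (ha : ∀ g ∈ S, dist (g • x₀) x₀ ≤ r₁)
    (hb : ∀ g ∈ S, ∀ g' ∈ S, dist ((g * g') • x₀) x₀ ≤ r₁ → g * g' ∈ S)
    (hfaithful : ∀ g : Γ, g ≠ 1 → ∃ x : X, g • x ≠ x) :
    ∃ V : Set C(X, X), IsOpen V ∧
      (⟨fun x : X => (1 : Γ) • x, (hiso 1).continuous⟩ : C(X, X)) ∈ V ∧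
      ∀ g : Γ, (⟨fun x : X => g • x, (hiso g).continuous⟩ : C(X, X)) ∈ V → g = 1 := by
  have : IsIsometricSMul Γ X := ⟨hiso⟩
  have : FaithfulSMul Γ X := ⟨fun {g h} hgh ↦ by
    by_contra hne
    obtain ⟨x, hx⟩ := hfaithful (h⁻¹ * g) (by simpa [inv_mul_eq_one, eq_comm] using hne)
    exact hx (by rw [mul_smul, hgh, inv_smul_smul])⟩
  have hF : dirichletDomain S x₀ ⊆ closedBall x₀ r₀ := fun x hx ↦ by
    rw [mem_closedBall', hr₀]
    exact le_csSup hbdd ⟨x, hFS ▸ hx, rfl⟩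
  have hr₁_pos : 0 < r₁ := by
    linarith [dist_nonneg.trans (mem_closedBall.1 (hF (self_mem_dirichletDomain S x₀)))]
  have hfinite : {g : Γ | g • x₀ ∈ ball x₀ r₁}.Finite := by
    rcases S.eq_empty_or_nonempty with rfl | hne
    · have : Subsingleton Γ := subsingleton_of_forall_eq 1 fun g ↦ by
        simpa [← hgen] using Subgroup.mem_top g
      exact toFinite _
    · exact hfin.subset fun g hg ↦
        (mem_iff_dist_smul_le hgeo hfin hne hsymm hgen hF hr₁ ha hb).2 (mem_ball.1 hg).le
  obtain ⟨V, hVo, hV⟩ :=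
    exists_isOpen_forall_smul_mem_iff_eq_one isOpen_ball (mem_ball_self hr₁_pos) hfinite
  exact ⟨V, hVo, (hV 1).2 rfl, fun g ↦ (hV g).1⟩
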